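/- Let X₁, X₂ be finite sets, n ≥ 1, M₁, M₂ ≥ 1, x₁, …, x_{M₁} ∈ X₁ⁿ, y₁, …, y_{M₂} ∈ X₂ⁿ. Let Q : X₁²×X₂² → ℝ satisfy ‖Q‖_∞ ≤ 1 and ⟨P^{⊗2}⊗R^{⊗2}, Q⟩ ≥ 0 for every P ∈ Δ(X₁), R ∈ Δ(X₂). Let D̄ ∈ Δ(X₁²×X₂²) be symmetric (invariant under swapping the two X₁-coordinates, the two X₂-coordinates, and both). Suppose that for all 1 ≤ i₁ < i₂ ≤ M₁ and 1 ≤ j₁ < j₂ ≤ M₂ one has d₁(τ_{x_{i₁}, x_{i₂}, y_{j₁}, y_{j₂}}, D̄) ≤ β, and that ⟨D̄, Q⟩ ≤ −ε′ with δ := ε′ − β > 0. Then (M₁−1)(M₂−1)·δ ≤ M₁ + M₂ + 1; in particular, min{M₁, M₂} ≤ 1 + 6/δ. -/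

import Mathlib

/-- `P` is a probability distribution on the finite set `X`. -/
def IsDist {X : Type*} [Fintype X] (P : X → ℝ) : Prop :=
  (∀ x, 0 ≤ P x) ∧ ∑ x, P x = 1

/-- The type (empirical distribution) of a length-`n` vector `v` over alphabet `X`. -/
noncomputable def typeOf {X : Type*} [DecidableEq X] {n : ℕ} (v : Fin n → X) : X → ℝ :=
  fun a => ((Finset.univ.filter (fun j => v j = a)).card : ℝ) / n

/-!
Sum `⟨τ, Q⟩` over all ordered quadruples of indices, where `τ` is the joint type of the four
codewords. Exchanging this sum with the average over the `n` positions turns it into an average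
of terms `M₁² M₂² ⟨P ⊗ P ⊗ R ⊗ R, Q⟩`, with `P` and `R` the types of the columns of the two codes
at a given position, so it is nonnegative. On the other hand a quadruple with `i₁ ≠ i₂` and
`j₁ ≠ j₂` contributes at most `-δ`, by `ℓ¹`–`ℓ^∞` duality and the symmetry of `D̄`, and each of the
other `M₁ M₂ (M₁ + M₂ - 1)` quadruples contributes at most `1`.
-/

open Finset

theorem card_mul_le_card_compl_mul_of_sum_nonneg {α : Type*} [Fintype α] [DecidableEq α]
    {F : α → ℝ} {c δ : ℝ} (S : Finset α) (hS : ∀ a ∈ S, F a ≤ -δ) (hSc : ∀ a ∈ Sᶜ, F a ≤ c)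
    (hF : 0 ≤ ∑ a, F a) :
    (#S : ℝ) * δ ≤ #Sᶜ * c := by
  have sum_le_on : ∑ a ∈ S, F a ≤ #S * -δ := by
    simpa only [nsmul_eq_mul] using sum_le_card_nsmul S F (-δ) hS
  have sum_le_off : ∑ a ∈ Sᶜ, F a ≤ #Sᶜ * c := by
    simpa only [nsmul_eq_mul] using sum_le_card_nsmul Sᶜ F c hSc
  rw [← sum_add_sum_compl S] at hF
  linarith

theorem cast_card_offDiag_univ (ι : Type*) [Fintype ι] :
    (#(univ : Finset ι).offDiag : ℝ) = Fintype.card ι * (Fintype.card ι - 1) := by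
  classical
  rw [offDiag_card, card_univ, Nat.cast_sub (Nat.le_mul_self _), Nat.cast_mul]
  ring

theorem card_sub_one_mul_card_sub_one_mul_le {ι κ : Type*} [Fintype ι] [Nonempty ι]
    [Fintype κ] [Nonempty κ] {F : (ι × ι) × (κ × κ) → ℝ} {c δ : ℝ} (hc : ∀ p, F p ≤ c)
    (hδ : ∀ i₁ i₂, i₁ ≠ i₂ → ∀ j₁ j₂, j₁ ≠ j₂ → F ((i₁, i₂), (j₁, j₂)) ≤ -δ)
    (hF : 0 ≤ ∑ p, F p) :
    ((Fintype.card ι : ℝ) - 1) * (Fintype.card κ - 1) * δ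
      ≤ (Fintype.card ι + Fintype.card κ - 1) * c := by
  classical
  let S : Finset ((ι × ι) × (κ × κ)) := univ.offDiag ×ˢ univ.offDiag
  have hS : ∀ p ∈ S, F p ≤ -δ := by
    rintro ⟨⟨i₁, i₂⟩, j₁, j₂⟩ hp
    obtain ⟨hi, hj⟩ : i₁ ≠ i₂ ∧ j₁ ≠ j₂ := by simpa [S] using hp
    exact hδ i₁ i₂ hi j₁ j₂ hj
  have double_count := card_mul_le_card_compl_mul_of_sum_nonneg S hS (fun p _ => hc p) hF
  set A := (Fintype.card ι : ℝ) with hA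
  set B := (Fintype.card κ : ℝ) with hB
  have card_S : (#S : ℝ) = A * (A - 1) * (B * (B - 1)) := by
    rw [card_product, Nat.cast_mul, cast_card_offDiag_univ, cast_card_offDiag_univ]
  have card_compl_S : (#Sᶜ : ℝ) = A * B * (A + B - 1) := by
    rw [card_compl, Nat.cast_sub (card_le_univ S), card_S]
    simp only [Fintype.card_prod, Nat.cast_mul, ← hA, ← hB]
    ring
  have hAB : 0 < A * B :=
    mul_pos (Nat.cast_pos.2 Fintype.card_pos) (Nat.cast_pos.2 Fintype.card_pos)
  rw [card_S, card_compl_S] at double_count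
  refine le_of_mul_le_mul_left ?_ hAB
  linarith

theorem min_le_one_add_three_div {a b : ℕ} {δ : ℝ} (hδ : 0 < δ)
    (h : ((a : ℝ) - 1) * (b - 1) * δ ≤ a + b - 1) :
    min (a : ℝ) b ≤ 1 + 3 / δ := by
  wlog hab : a ≤ b generalizing a b
  · rw [min_comm]
    exact this (by linarith) (le_of_not_ge hab)
  refine (min_le_left _ _).trans ?_
  rcases Nat.lt_or_ge 1 a with ha | ha
  · have ha' : (2 : ℝ) ≤ a := by exact_mod_cast ha
    have hab' : (a : ℝ) ≤ b := by exact_mod_cast hab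
    have hδ_le : ((a : ℝ) - 1) * δ ≤ 3 := by
      refine le_of_mul_le_mul_right ?_ (show (0 : ℝ) < b - 1 by linarith)
      calc ((a : ℝ) - 1) * δ * (b - 1) = (a - 1) * (b - 1) * δ := by ring
        _ ≤ a + b - 1 := h
        _ ≤ 3 * (b - 1) := by linarith
    linarith [(le_div_iff₀ hδ).2 hδ_le]
  · have ha' : (a : ℝ) ≤ 1 := by exact_mod_cast ha
    linarith [div_pos three_pos hδ]

section L1Dist

variable {Z : Type*} [Fintype Z]

/-- The `ℓ¹` distance `d₁` between two functions on a finite set. -/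
def l1Dist (S T : Z → ℝ) : ℝ := ∑ z, |S z - T z|

theorem dotProduct_sub_dotProduct_le_l1Dist (S T : Z → ℝ) {Q : Z → ℝ} (hQ : ∀ z, |Q z| ≤ 1) :
    S ⬝ᵥ Q - T ⬝ᵥ Q ≤ l1Dist S T := by
  rw [← sub_dotProduct]
  refine sum_le_sum fun z _ => ?_
  calc (S z - T z) * Q z ≤ |S z - T z| * |Q z| := (le_abs_self _).trans (abs_mul _ _).le
    _ ≤ |S z - T z| := mul_le_of_le_one_right (abs_nonneg _) (hQ z)

theorem IsDist.dotProduct_le {P Q : Z → ℝ} {c : ℝ} (hP : IsDist P) (hQ : ∀ z, Q z ≤ c) :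
    P ⬝ᵥ Q ≤ c :=
  calc P ⬝ᵥ Q ≤ ∑ z, P z * c := sum_le_sum fun z _ => mul_le_mul_of_nonneg_left (hQ z) (hP.1 z)
    _ = c := by rw [← sum_mul, hP.2, one_mul]

end L1Dist

section Types

theorem typeOf_comp_apply {Y Z : Type*} [DecidableEq Y] [DecidableEq Z] {n : ℕ}
    {f : Y → Z} (hf : f.Injective) (v : Fin n → Y) (a : Y) :
    typeOf (f ∘ v) (f a) = typeOf v a := by
  simp only [typeOf, Function.comp_apply, hf.eq_iff]

variable {Y Z : Type*} [Fintype Y] [DecidableEq Y] [Fintype Z] [DecidableEq Z] {n : ℕ}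

theorem sum_typeOf_mul (v : Fin n → Z) (g : Z → ℝ) :
    ∑ z, typeOf v z * g z = (∑ k, g (v k)) / n := by
  rw [← sum_fiberwise' univ v g, sum_div]
  refine sum_congr rfl fun z _ => ?_
  rw [sum_const, nsmul_eq_mul, typeOf, div_mul_eq_mul_div]

theorem isDist_typeOf (hn : 1 ≤ n) (v : Fin n → Z) : IsDist (typeOf v) := by
  have hn' : (n : ℝ) ≠ 0 := by positivity
  refine ⟨fun a => by unfold typeOf; positivity, ?_⟩
  simpa [hn'] using sum_typeOf_mul v 1

theorem l1Dist_typeOf_comp (e : Y ≃ Z) (v : Fin n → Y) (D : Z → ℝ) :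
    l1Dist (typeOf (e ∘ v)) D = l1Dist (typeOf v) (D ∘ e) := by
  unfold l1Dist
  rw [← e.sum_comp]
  simp only [typeOf_comp_apply e.injective, Function.comp_apply]

end Types

section CoGood

variable {X₁ X₂ : Type*} [Fintype X₁] [Fintype X₂] {M₁ M₂ : ℕ}

/-- `Q` is co-good: `⟨P ⊗ P ⊗ R ⊗ R, Q⟩ ≥ 0` for all distributions `P` on `X₁` and `R` on `X₂`. -/
def CoGood (Q : X₁ × X₁ × X₂ × X₂ → ℝ) : Prop :=
  ∀ (P : X₁ → ℝ) (R : X₂ → ℝ), IsDist P → IsDist R →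
    0 ≤ ∑ z : X₁ × X₁ × X₂ × X₂, P z.1 * P z.2.1 * R z.2.2.1 * R z.2.2.2 * Q z

theorem sum_typeOf_mul_typeOf_mul [DecidableEq X₁] [DecidableEq X₂]
    (u : Fin M₁ → X₁) (w : Fin M₂ → X₂) (Q : X₁ × X₁ × X₂ × X₂ → ℝ) :
    ∑ z : X₁ × X₁ × X₂ × X₂,
        typeOf u z.1 * typeOf u z.2.1 * typeOf w z.2.2.1 * typeOf w z.2.2.2 * Q z
      = (∑ i₁, ∑ i₂, ∑ j₁, ∑ j₂, Q (u i₁, u i₂, w j₁, w j₂)) / ((M₁ : ℝ) ^ 2 * (M₂ : ℝ) ^ 2) := by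
  simp only [Fintype.sum_prod_type, mul_assoc, ← mul_sum]
  simp only [sum_typeOf_mul, ← sum_div, div_div]
  ring

theorem CoGood.sum_nonneg {Q : X₁ × X₁ × X₂ × X₂ → ℝ} (hQ : CoGood Q) (hM₁ : 1 ≤ M₁)
    (hM₂ : 1 ≤ M₂) (u : Fin M₁ → X₁) (w : Fin M₂ → X₂) :
    0 ≤ ∑ i₁, ∑ i₂, ∑ j₁, ∑ j₂, Q (u i₁, u i₂, w j₁, w j₂) := by
  classical
  have h := hQ _ _ (isDist_typeOf hM₁ u) (isDist_typeOf hM₂ w)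
  rw [sum_typeOf_mul_typeOf_mul] at h
  have hpos : (0 : ℝ) < (M₁ : ℝ) ^ 2 * (M₂ : ℝ) ^ 2 := by positivity
  simpa only [div_mul_cancel₀ _ hpos.ne'] using mul_nonneg h hpos.le

end CoGood

section JointTypes

variable {X₁ X₂ : Type*} [Fintype X₁] [DecidableEq X₁] [Fintype X₂] [DecidableEq X₂]
  {n M₁ M₂ : ℕ}

/-- The joint type `τ_{u, u', v, v'}` of two words over `X₁` and two words over `X₂`. -/
noncomputable def jointType (u u' : Fin n → X₁) (v v' : Fin n → X₂) :
    X₁ × X₁ × X₂ × X₂ → ℝ :=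
  typeOf fun k => (u k, u' k, v k, v' k)

theorem jointType_dotProduct (u u' : Fin n → X₁) (v v' : Fin n → X₂)
    (Q : X₁ × X₁ × X₂ × X₂ → ℝ) :
    jointType u u' v v' ⬝ᵥ Q = (∑ k, Q (u k, u' k, v k, v' k)) / n :=
  sum_typeOf_mul _ Q

theorem l1Dist_jointType_swap_left {D : X₁ × X₁ × X₂ × X₂ → ℝ}
    (hD : ∀ a₁ a₂ b₁ b₂, D (a₁, a₂, b₁, b₂) = D (a₂, a₁, b₁, b₂))
    (u u' : Fin n → X₁) (v v' : Fin n → X₂) :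
    l1Dist (jointType u' u v v') D = l1Dist (jointType u u' v v') D := by
  let e : X₁ × X₁ × X₂ × X₂ ≃ X₁ × X₁ × X₂ × X₂ :=
    Function.Involutive.toPerm (fun z => (z.2.1, z.1, z.2.2)) fun _ => rfl
  have hDe : D ∘ e = D := funext fun z => (hD z.1 z.2.1 z.2.2.1 z.2.2.2).symm
  calc l1Dist (typeOf (e ∘ fun k => (u k, u' k, v k, v' k))) D
      = l1Dist (jointType u u' v v') (D ∘ e) := l1Dist_typeOf_comp e _ D
    _ = l1Dist (jointType u u' v v') D := by rw [hDe]

theorem l1Dist_jointType_swap_right {D : X₁ × X₁ × X₂ × X₂ → ℝ}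
    (hD : ∀ a₁ a₂ b₁ b₂, D (a₁, a₂, b₁, b₂) = D (a₁, a₂, b₂, b₁))
    (u u' : Fin n → X₁) (v v' : Fin n → X₂) :
    l1Dist (jointType u u' v' v) D = l1Dist (jointType u u' v v') D := by
  let e : X₁ × X₁ × X₂ × X₂ ≃ X₁ × X₁ × X₂ × X₂ :=
    Function.Involutive.toPerm (fun z => (z.1, z.2.1, z.2.2.2, z.2.2.1)) fun _ => rfl
  have hDe : D ∘ e = D := funext fun z => (hD z.1 z.2.1 z.2.2.1 z.2.2.2).symm
  calc l1Dist (typeOf (e ∘ fun k => (u k, u' k, v k, v' k))) D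
      = l1Dist (jointType u u' v v') (D ∘ e) := l1Dist_typeOf_comp e _ D
    _ = l1Dist (jointType u u' v v') D := by rw [hDe]

theorem l1Dist_jointType_le_of_ne {D : X₁ × X₁ × X₂ × X₂ → ℝ} {β : ℝ}
    (hD_left : ∀ a₁ a₂ b₁ b₂, D (a₁, a₂, b₁, b₂) = D (a₂, a₁, b₁, b₂))
    (hD_right : ∀ a₁ a₂ b₁ b₂, D (a₁, a₂, b₁, b₂) = D (a₁, a₂, b₂, b₁))
    {x : Fin M₁ → Fin n → X₁} {y : Fin M₂ → Fin n → X₂}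
    (hclose : ∀ i₁ i₂, i₁ < i₂ → ∀ j₁ j₂, j₁ < j₂ →
      l1Dist (jointType (x i₁) (x i₂) (y j₁) (y j₂)) D ≤ β)
    {i₁ i₂ : Fin M₁} (hi : i₁ ≠ i₂) {j₁ j₂ : Fin M₂} (hj : j₁ ≠ j₂) :
    l1Dist (jointType (x i₁) (x i₂) (y j₁) (y j₂)) D ≤ β := by
  wlog hi_lt : i₁ < i₂ generalizing i₁ i₂
  · rw [l1Dist_jointType_swap_left hD_left]
    exact this hi.symm (hi.lt_or_gt.resolve_left hi_lt)
  wlog hj_lt : j₁ < j₂ generalizing j₁ j₂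
  · rw [l1Dist_jointType_swap_right hD_right]
    exact this hj.symm (hj.lt_or_gt.resolve_left hj_lt)
  exact hclose i₁ i₂ hi_lt j₁ j₂ hj_lt

theorem CoGood.sum_jointType_dotProduct_nonneg {Q : X₁ × X₁ × X₂ × X₂ → ℝ} (hQ : CoGood Q)
    (hM₁ : 1 ≤ M₁) (hM₂ : 1 ≤ M₂) (x : Fin M₁ → Fin n → X₁) (y : Fin M₂ → Fin n → X₂) :
    0 ≤ ∑ p : (Fin M₁ × Fin M₁) × (Fin M₂ × Fin M₂),
      jointType (x p.1.1) (x p.1.2) (y p.2.1) (y p.2.2) ⬝ᵥ Q := by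
  simp only [jointType_dotProduct, ← sum_div]
  rw [sum_comm]
  refine div_nonneg (Finset.sum_nonneg fun k _ => ?_) n.cast_nonneg
  simpa only [Fintype.sum_prod_type] using hQ.sum_nonneg hM₁ hM₂ (x · k) (y · k)

theorem CoGood.sub_one_mul_sub_one_mul_le {Q : X₁ × X₁ × X₂ × X₂ → ℝ} {δ : ℝ} (hQ : CoGood Q)
    (hQ_le : ∀ z, Q z ≤ 1) (hn : 1 ≤ n) (hM₁ : 1 ≤ M₁) (hM₂ : 1 ≤ M₂)
    (x : Fin M₁ → Fin n → X₁) (y : Fin M₂ → Fin n → X₂)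
    (hδ : ∀ i₁ i₂, i₁ ≠ i₂ → ∀ j₁ j₂, j₁ ≠ j₂ →
      jointType (x i₁) (x i₂) (y j₁) (y j₂) ⬝ᵥ Q ≤ -δ) :
    ((M₁ : ℝ) - 1) * (M₂ - 1) * δ ≤ M₁ + M₂ - 1 := by
  have : Nonempty (Fin M₁) := Fin.pos_iff_nonempty.1 hM₁
  have : Nonempty (Fin M₂) := Fin.pos_iff_nonempty.1 hM₂
  let F (p : (Fin M₁ × Fin M₁) × (Fin M₂ × Fin M₂)) : ℝ :=
    jointType (x p.1.1) (x p.1.2) (y p.2.1) (y p.2.2) ⬝ᵥ Q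
  have hF_le (p) : F p ≤ 1 := (isDist_typeOf hn _).dotProduct_le hQ_le
  have hF_sum : 0 ≤ ∑ p, F p := hQ.sum_jointType_dotProduct_nonneg hM₁ hM₂ x y
  simpa only [Fintype.card_fin, mul_one] using
    card_sub_one_mul_card_sub_one_mul_le hF_le hδ hF_sum

theorem stmt_16_general {Q D : X₁ × X₁ × X₂ × X₂ → ℝ} {β ε : ℝ} (hn : 1 ≤ n) (hM₁ : 1 ≤ M₁)
    (hM₂ : 1 ≤ M₂) (x : Fin M₁ → Fin n → X₁) (y : Fin M₂ → Fin n → X₂)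
    (hQ : ∀ z, |Q z| ≤ 1) (hQgood : CoGood Q)
    (hD_left : ∀ a₁ a₂ b₁ b₂, D (a₁, a₂, b₁, b₂) = D (a₂, a₁, b₁, b₂))
    (hD_right : ∀ a₁ a₂ b₁ b₂, D (a₁, a₂, b₁, b₂) = D (a₁, a₂, b₂, b₁))
    (hclose : ∀ i₁ i₂, i₁ < i₂ → ∀ j₁ j₂, j₁ < j₂ →
      l1Dist (jointType (x i₁) (x i₂) (y j₁) (y j₂)) D ≤ β)
    (hDQ : D ⬝ᵥ Q ≤ -ε) (hδ : 0 < ε - β) :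
    ((M₁ : ℝ) - 1) * (M₂ - 1) * (ε - β) ≤ M₁ + M₂ - 1 ∧
      min (M₁ : ℝ) M₂ ≤ 1 + 3 / (ε - β) := by
  have hoff : ∀ i₁ i₂, i₁ ≠ i₂ → ∀ j₁ j₂, j₁ ≠ j₂ →
      jointType (x i₁) (x i₂) (y j₁) (y j₂) ⬝ᵥ Q ≤ -(ε - β) := by
    intro i₁ i₂ hi j₁ j₂ hj
    linarith [l1Dist_jointType_le_of_ne hD_left hD_right hclose hi hj,
      dotProduct_sub_dotProduct_le_l1Dist (jointType (x i₁) (x i₂) (y j₁) (y j₂)) D hQ]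
  have bound := hQgood.sub_one_mul_sub_one_mul_le (fun z => (abs_le.1 (hQ z)).2) hn hM₁ hM₂ x y hoff
  exact ⟨bound, min_le_one_add_three_div hδ bound⟩

end JointTypes

theorem stmt_16 (X₁ X₂ : Type*) [Fintype X₁] [DecidableEq X₁] [Fintype X₂] [DecidableEq X₂]
    (n M₁ M₂ : ℕ) (hn : 1 ≤ n) (hM₁ : 1 ≤ M₁) (hM₂ : 1 ≤ M₂)
    (x : Fin M₁ → Fin n → X₁) (y : Fin M₂ → Fin n → X₂)
    (Q : X₁ × X₁ × X₂ × X₂ → ℝ) (hQ : ∀ z, |Q z| ≤ 1)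
    (hQgood : ∀ (P : X₁ → ℝ) (R : X₂ → ℝ), IsDist P → IsDist R →
      0 ≤ ∑ z : X₁ × X₁ × X₂ × X₂, P z.1 * P z.2.1 * R z.2.2.1 * R z.2.2.2 * Q z)
    (Dbar : X₁ × X₁ × X₂ × X₂ → ℝ) (hDbar : IsDist Dbar)
    (hsym : ∀ a₁ a₂ b₁ b₂,
      Dbar (a₁, a₂, b₁, b₂) = Dbar (a₂, a₁, b₁, b₂)
      ∧ Dbar (a₁, a₂, b₁, b₂) = Dbar (a₁, a₂, b₂, b₁)
      ∧ Dbar (a₁, a₂, b₁, b₂) = Dbar (a₂, a₁, b₂, b₁))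
    (β ε' : ℝ) (hε' : 0 < ε')
    (hclose : ∀ i₁ i₂ : Fin M₁, i₁ < i₂ → ∀ j₁ j₂ : Fin M₂, j₁ < j₂ →
      (∑ z, |typeOf (fun k => (x i₁ k, x i₂ k, y j₁ k, y j₂ k)) z - Dbar z|) ≤ β)
    (hDQ : (∑ z, Dbar z * Q z) ≤ -ε')
    (hδ : 0 < ε' - β) :
    ((M₁ : ℝ) - 1) * ((M₂ : ℝ) - 1) * (ε' - β) ≤ (M₁ : ℝ) + (M₂ : ℝ) + 1 ∧
    min (M₁ : ℝ) (M₂ : ℝ) ≤ 1 + 6 / (ε' - β) := by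
  obtain ⟨hprod, hmin⟩ := stmt_16_general hn hM₁ hM₂ x y hQ hQgood (fun _ _ _ _ => (hsym ..).1)
    (fun _ _ _ _ => (hsym ..).2.1) hclose hDQ hδ
  exact ⟨hprod.trans (by linarith), hmin.trans (by gcongr; norm_num)⟩
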